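/- Let A₁ and A₂ be two simple and covering literals that are unifiable with mgu σ. Then A₁σ is simple. -/

import Mathlib

/-!
Common formalization of first-order clausal logic (without equality), following
"Resolution-based query answering and rewriting for the (loosely) guarded fragment".
-/

set_option linter.unusedVariables false

namespace QGF

/-- Symbols: function symbols, constant symbols and predicate symbols, each indexed by ℕ. -/
inductive Head : Type
  | fn : ℕ → Head
  | cn : ℕ → Head
  | pr : ℕ → Head
  deriving DecidableEq

/-- First-order terms.  A constant `c` is represented as `Term.app (Head.cn c) []`. -/
inductive Term : Type
  | var : ℕ → Term
  | app : Head → List Term → Term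

namespace Term

def isVar : Term → Prop
  | var _ => True
  | _ => False

def isConst : Term → Prop
  | app (.cn _) [] => True
  | _ => False

/-- A compound term is a term that is neither a variable nor a constant. -/
def isCompound (t : Term) : Prop := ¬ t.isVar ∧ ¬ t.isConst

/-- Occurrence of a variable in a term. -/
inductive HasVar : Term → ℕ → Prop
  | var (x : ℕ) : HasVar (var x) x
  | app {h : Head} {ts : List Term} {x : ℕ} {t : Term} :
      t ∈ ts → HasVar t x → HasVar (app h ts) x

def vars (t : Term) : Set ℕ := {x | t.HasVar x}

/-- Subterm relation. -/
inductive SubtermOf : Term → Term → Prop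
  | refl (t : Term) : SubtermOf t t
  | app {s : Term} {h : Head} {ts : List Term} {t : Term} :
      t ∈ ts → SubtermOf s t → SubtermOf s (app h ts)

/-- Depth of a term: variables and constants have depth 0. -/
def depth : Term → ℕ
  | var _ => 0
  | app _ ts => (ts.attach.map fun t => depth t.1 + 1).foldr max 0
  decreasing_by
    have := List.sizeOf_lt_of_mem t.2
    simp only [Term.app.sizeOf_spec]
    omega

/-- Applying a substitution to a term. -/
def subst (σ : ℕ → Term) : Term → Term
  | var x => σ x
  | app h ts => app h (ts.attach.map fun t => subst σ t.1)
  decreasing_by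
    have := List.sizeOf_lt_of_mem t.2
    simp only [Term.app.sizeOf_spec]
    omega

def isGround (t : Term) : Prop := t.vars = ∅

/-- An argument is flat if it is a variable or a constant. -/
def flatArg (t : Term) : Prop := t.isVar ∨ t.isConst

/-- An argument is simple if it is a variable, a constant, or a compound term all of
whose arguments are variables or constants. -/
def simpleArg : Term → Prop
  | var _ => True
  | app _ ts => ∀ u ∈ ts, flatArg u

end Term

/-- Substitutions. -/
abbrev Subst := ℕ → Term

/-- Atoms. -/
structure Atom where
  pred : ℕ
  args : List Term

namespace Atom

def subst (σ : Subst) (a : Atom) : Atom := ⟨a.pred, a.args.map (Term.subst σ)⟩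

def vars (a : Atom) : Set ℕ := {x | ∃ t ∈ a.args, x ∈ t.vars}

def flat (a : Atom) : Prop := ∀ t ∈ a.args, t.flatArg

def simple (a : Atom) : Prop := ∀ t ∈ a.args, t.simpleArg

def ground (a : Atom) : Prop := a.vars = ∅

/-- An atom `P(t₁,…,tₙ)` viewed as the term with head the predicate symbol `P`. -/
def toTerm (a : Atom) : Term := .app (.pr a.pred) a.args

end Atom

/-- Literals. -/
structure Lit where
  pos : Bool
  atom : Atom

def Lit.mkPos (a : Atom) : Lit := ⟨true, a⟩
def Lit.mkNeg (a : Atom) : Lit := ⟨false, a⟩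

namespace Lit

def subst (σ : Subst) (L : Lit) : Lit := ⟨L.pos, L.atom.subst σ⟩

def vars (L : Lit) : Set ℕ := L.atom.vars

def ground (L : Lit) : Prop := L.vars = ∅

def flat (L : Lit) : Prop := L.atom.flat

def simple (L : Lit) : Prop := L.atom.simple

/-- Occurrence of a term in a literal (as a subterm of an argument). -/
def hasTerm (L : Lit) (t : Term) : Prop := ∃ u ∈ L.atom.args, t.SubtermOf u

def hasCompound (L : Lit) : Prop := ∃ t, L.hasTerm t ∧ t.isCompound

/-- A literal is covering if every compound term occurring in it contains exactly the
variables of the literal. -/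
def covering (L : Lit) : Prop := ∀ t, L.hasTerm t → t.isCompound → t.vars = L.vars

end Lit

/-- A clause is a (multi)set of literals, represented as a list, read disjunctively,
with all variables implicitly universally quantified. -/
abbrev Clause := List Lit

namespace Clause

def subst (σ : Subst) (C : Clause) : Clause := C.map (Lit.subst σ)

def vars (C : Clause) : Set ℕ := {x | ∃ L ∈ C, x ∈ L.vars}

def ground (C : Clause) : Prop := vars C = ∅

def flat (C : Clause) : Prop := ∀ L ∈ C, L.flat

def simple (C : Clause) : Prop := ∀ L ∈ C, L.simple

def hasTerm (C : Clause) (t : Term) : Prop := ∃ L ∈ C, L.hasTerm t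

/-- A clause is covering if every compound term occurring in it contains exactly the
variables of the clause. -/
def covering (C : Clause) : Prop := ∀ t, hasTerm C t → t.isCompound → t.vars = vars C

def hasNegCompound (C : Clause) : Prop := ∃ L ∈ C, L.pos = false ∧ L.hasCompound

def hasCompound (C : Clause) : Prop := ∃ L ∈ C, L.hasCompound

/-- The predicate symbols occurring in a clause. -/
def preds (C : Clause) : Set ℕ := {p | ∃ L ∈ C, L.atom.pred = p}

/-- The depth of a clause: the maximal depth of a term occurring in it. -/
def depth (C : Clause) : ℕ :=
  (C.map fun L => (L.atom.args.map Term.depth).foldr max 0).foldr max 0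

end Clause

/-- `L` is a guard of `C`:  a negative flat literal of `C` containing all variables of `C`. -/
def Lit.isGuardOf (L : Lit) (C : Clause) : Prop :=
  L ∈ C ∧ L.pos = false ∧ L.flat ∧ L.vars = Clause.vars C

/-- Guarded clauses (Definition 3.3). -/
def Clause.guarded (C : Clause) : Prop :=
  Clause.simple C ∧ Clause.covering C ∧ (Clause.ground C ∨ ∃ L : Lit, L.isGuardOf C)

/-- `G` is a set of loose guards of `C`. -/
def Clause.looseGuardsOf (G : List Lit) (C : Clause) : Prop :=
  (∀ L ∈ G, L ∈ C ∧ L.pos = false ∧ L.flat) ∧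
  (∀ x ∈ Clause.vars C, ∃ L ∈ G, x ∈ L.vars) ∧
  (∀ x ∈ Clause.vars C, ∀ y ∈ Clause.vars C, x ≠ y → ∃ L ∈ G, x ∈ L.vars ∧ y ∈ L.vars)

/-- Loosely guarded clauses (Definition 3.3). -/
def Clause.looselyGuarded (C : Clause) : Prop :=
  Clause.simple C ∧ Clause.covering C ∧
    (Clause.ground C ∨ ∃ G : List Lit, Clause.looseGuardsOf G C)

/-- Query clauses: flat clauses containing only negative literals (Definition 3.2). -/
def Clause.query (C : Clause) : Prop := Clause.flat C ∧ ∀ L ∈ C, L.pos = false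

/-! ### Semantics -/

/-- First-order interpretations. -/
structure Interp : Type 1 where
  dom : Type
  nonempty : Nonempty dom
  fn : Head → List dom → dom
  pr : ℕ → List dom → Prop

def Term.eval (I : Interp) (ν : ℕ → I.dom) : Term → I.dom
  | .var x => ν x
  | .app h ts => I.fn h (ts.attach.map fun t => Term.eval I ν t.1)
  decreasing_by
    have := List.sizeOf_lt_of_mem t.2
    simp only [Term.app.sizeOf_spec]
    omega

def Atom.holds (I : Interp) (ν : ℕ → I.dom) (a : Atom) : Prop :=
  I.pr a.pred (a.args.map (Term.eval I ν))

def Lit.holds (I : Interp) (ν : ℕ → I.dom) (L : Lit) : Prop :=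
  if L.pos then L.atom.holds I ν else ¬ L.atom.holds I ν

/-- A clause holds under a valuation if one of its literals does. -/
def Clause.holdsUnder (I : Interp) (ν : ℕ → I.dom) (C : Clause) : Prop :=
  ∃ L ∈ C, L.holds I ν

/-- A clause is true in an interpretation if its universal closure holds. -/
def Clause.trueIn (I : Interp) (C : Clause) : Prop := ∀ ν, Clause.holdsUnder I ν C

def Interp.models (I : Interp) (N : Set Clause) : Prop := ∀ C ∈ N, Clause.trueIn I C

/-- Satisfiability of a set of clauses. -/
def satisfiable (N : Set Clause) : Prop := ∃ I : Interp, I.models N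

/-- Logical consequence:  every model of `N` is a model of `C`. -/
def entails (N : Set Clause) (C : Clause) : Prop :=
  ∀ I : Interp, I.models N → Clause.trueIn I C

/-- A tautology is a clause true in every interpretation. -/
def Tautology (C : Clause) : Prop := ∀ (I : Interp) (ν : ℕ → I.dom), Clause.holdsUnder I ν C

/-- Two clauses are variants if each is an instance of the other. -/
def Variant (C D : Clause) : Prop :=
  (∃ σ : Subst, Clause.subst σ C = D) ∧ (∃ ρ : Subst, Clause.subst ρ D = C)

/-! ### Unification -/

def Unifies (σ : Subst) (a b : Atom) : Prop := a.subst σ = b.subst σ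

/-- Most general unifiers. -/
def IsMGU (σ : Subst) (a b : Atom) : Prop :=
  Unifies σ a b ∧ ∀ θ : Subst, Unifies θ a b → ∃ ρ : Subst, ∀ x, (σ x).subst ρ = θ x

def Lit.unifies (σ : Subst) (L1 L2 : Lit) : Prop := L1.subst σ = L2.subst σ

def Lit.isMGU (σ : Subst) (L1 L2 : Lit) : Prop :=
  Lit.unifies σ L1 L2 ∧ ∀ θ : Subst, Lit.unifies θ L1 L2 → ∃ ρ : Subst, ∀ x, (σ x).subst ρ = θ x

def UnifiesAll (σ : Subst) (ps : List (Atom × Atom)) : Prop :=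
  ∀ p ∈ ps, Atom.subst σ p.1 = Atom.subst σ p.2

/-- Simultaneous most general unifiers. -/
def IsSimMGU (σ : Subst) (ps : List (Atom × Atom)) : Prop :=
  UnifiesAll σ ps ∧ ∀ θ : Subst, UnifiesAll θ ps → ∃ ρ : Subst, ∀ x, (σ x).subst ρ = θ x

/-! ### Condensation, separability -/

/-- `D` is a subclause of `C` (as multisets). -/
def SubClause (D C : Clause) : Prop := (↑D : Multiset Lit) ≤ (↑C : Multiset Lit)

/-- `D` is a condensation of `C`: a proper subclause of `C` which is an instance of `C`
(up to duplicate literals). -/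
def IsCondensation (D C : Clause) : Prop :=
  SubClause D C ∧ D.length < C.length ∧
    ∃ σ : Subst, ∀ L : Lit, L ∈ D ↔ L ∈ Clause.subst σ C

/-- A clause `C ∨ D` is separable into `C` and `D` if both are non-empty and neither
variable set is included in the other. -/
def Separable (C D : Clause) : Prop :=
  C ≠ [] ∧ D ≠ [] ∧ ¬ Clause.vars C ⊆ Clause.vars D ∧ ¬ Clause.vars D ⊆ Clause.vars C

/-- A clause is indecomposable if it cannot be partitioned into two non-empty
variable-disjoint subclauses. -/
def Clause.indecomposable (C : Clause) : Prop :=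
  ¬ ∃ D E : Clause, D ≠ [] ∧ E ≠ [] ∧
      (↑C : Multiset Lit) = (↑D : Multiset Lit) + (↑E : Multiset Lit) ∧
      Clause.vars D ∩ Clause.vars E = ∅

/-- The predicate symbols occurring in a clause set. -/
def SetPreds (N : Set Clause) : Set ℕ := {p | ∃ C ∈ N, p ∈ Clause.preds C}

/-! ### Orderings -/

namespace Head

def rank : Head → ℕ
  | .pr _ => 0
  | .cn _ => 1
  | .fn _ => 2

def idx : Head → ℕ
  | .pr n => n
  | .cn n => n
  | .fn n => n

/-- The precedence: every function symbol is greater than every constant, and every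
constant is greater than every predicate symbol. -/
def prec (g h : Head) : Prop := g.rank < h.rank ∨ (g.rank = h.rank ∧ g.idx < h.idx)

end Head

/-- The lexicographic path ordering on terms induced by the precedence `Head.prec`.
`LpoGT s t` means `s ≻_lpo t`. -/
inductive LpoGT : Term → Term → Prop
  | subRefl {h : Head} {ss : List Term} {t : Term} :
      t ∈ ss → LpoGT (.app h ss) t
  | sub {h : Head} {ss : List Term} {t : Term} (s : Term) :
      s ∈ ss → LpoGT s t → LpoGT (.app h ss) t
  | prec {h g : Head} {ss ts : List Term} :
      Head.prec g h → (∀ t ∈ ts, LpoGT (.app h ss) t) → LpoGT (.app h ss) (.app g ts)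
  | lex {h : Head} {ss ts u ss' ts' : List Term} {s t : Term} :
      ss = u ++ s :: ss' → ts = u ++ t :: ts' → LpoGT s t →
      (∀ t' ∈ ts, LpoGT (.app h ss) t') → LpoGT (.app h ss) (.app h ts)

/-- The induced lexicographic path ordering on literals, where a negative literal is
greater than the corresponding positive literal. -/
def Lit.lpoGT (L1 L2 : Lit) : Prop :=
  LpoGT L1.atom.toTerm L2.atom.toTerm ∨
    (L1.atom.toTerm = L2.atom.toTerm ∧ L1.pos = false ∧ L2.pos = true)

/-- Admissible orderings on literals; `ord L L'` means `L ≻ L'`. -/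
structure Admissible (ord : Lit → Lit → Prop) : Prop where
  trans : ∀ {a b c : Lit}, ord a b → ord b c → ord a c
  irrefl : ∀ a : Lit, ¬ ord a a
  totalGround : ∀ a b : Lit, a.ground → b.ground → a = b ∨ ord a b ∨ ord b a
  wfGround : WellFounded fun a b : Lit => a.ground ∧ b.ground ∧ ord b a
  liftable : ∀ (a b : Lit) (σ : Subst), ord a b → ord (a.subst σ) (b.subst σ)
  negGtPos : ∀ a : Atom, a.ground → ord (Lit.mkNeg a) (Lit.mkPos a)
  negCompat : ∀ a b : Atom, a.ground → b.ground →
    ord (Lit.mkPos b) (Lit.mkPos a) → ord (Lit.mkPos b) (Lit.mkNeg a)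

/-- The multiset extension of a literal ordering to clauses; `ClauseGT ord C D` means
`C ≻ D`. -/
def ClauseGT (ord : Lit → Lit → Prop) (C D : Clause) : Prop :=
  ∃ X Y Z : Multiset Lit,
    (↑C : Multiset Lit) = Z + X ∧ (↑D : Multiset Lit) = Z + Y ∧ X ≠ 0 ∧
      ∀ y ∈ Y, ∃ x ∈ X, ord x y

/-- `L` is maximal with respect to a clause `C` (`C` not necessarily containing `L`):
some ground instance of `L` is not smaller than the corresponding instances of the
literals of `C`. -/
def maxIn (ord : Lit → Lit → Prop) (L : Lit) (C : Clause) : Prop :=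
  ∃ σ : Subst, Lit.ground (L.subst σ) ∧ Clause.ground (Clause.subst σ C) ∧
    ∀ L' ∈ C, ¬ ord (Lit.subst σ L') (Lit.subst σ L)

/-- `L` is strictly maximal with respect to a clause `C`. -/
def strictMaxIn (ord : Lit → Lit → Prop) (L : Lit) (C : Clause) : Prop :=
  ∃ σ : Subst, Lit.ground (L.subst σ) ∧ Clause.ground (Clause.subst σ C) ∧
    ∀ L' ∈ C, ord (Lit.subst σ L) (Lit.subst σ L')

/-! ### Redundancy -/

def GroundInstanceOf (D C : Clause) : Prop := (∃ σ : Subst, D = Clause.subst σ C) ∧ Clause.ground D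

/-- Redundancy of a clause with respect to a clause set `N`:  every ground instance is
entailed by finitely many smaller ground instances of clauses of `N`. -/
def redundantClause (ord : Lit → Lit → Prop) (N : Set Clause) (C : Clause) : Prop :=
  ∀ D : Clause, GroundInstanceOf D C →
    ∃ S : Finset Clause, (∀ E ∈ S, ∃ C' ∈ N, GroundInstanceOf E C') ∧
      entails (↑S) D ∧ ∀ E ∈ S, ClauseGT ord D E

/-- An inference is redundant in `N` if a premise is redundant, or its conclusion is
redundant in `N` or belongs to `N`. -/
def RedundantInference (ord : Lit → Lit → Prop) (N : Set Clause)
    (premises : List Clause) (concl : Clause) : Prop :=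
  (∃ p ∈ premises, redundantClause ord N p) ∨ redundantClause ord N concl ∨ concl ∈ N

/-! ### Selection and eligibility -/

/-- Selection functions: select a set of negative literals of a clause. -/
def SelFn := Clause → Set Lit

def SelOK (sel : SelFn) : Prop := ∀ C : Clause, ∀ L ∈ sel C, L ∈ C ∧ L.pos = false

/-- A literal is eligible if it is selected, or nothing is selected and it is maximal. -/
def Eligible (ord : Lit → Lit → Prop) (sel : SelFn) (C : Clause) (L : Lit) : Prop :=
  (sel C = ∅ ∧ L ∈ C ∧ maxIn ord L C) ∨ L ∈ sel C

/-- Eligibility under the refinement T-Refine (Algorithm 1), in the cases not depending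
on side premises:  maximal literals for ground clauses and clauses with positive
compound terms, a selected negative compound-term literal, or a selected guard. -/
def EligibleTR (C : Clause) (L : Lit) : Prop :=
  L ∈ C ∧
    ((Clause.ground C ∧ maxIn Lit.lpoGT L C) ∨
     (¬ Clause.ground C ∧ Clause.hasNegCompound C ∧ L.pos = false ∧ L.hasCompound) ∨
     (¬ Clause.ground C ∧ ¬ Clause.hasNegCompound C ∧ Clause.hasCompound C ∧
        maxIn Lit.lpoGT L C) ∨
     (¬ Clause.ground C ∧ ¬ Clause.hasCompound C ∧ L.isGuardOf C))

/-! ### Top-variable resolution -/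

/-- `x` is a top variable of the negative atoms `A i` with respect to the candidate
unifier `σ'`:  the depth of `σ' x` is maximal. -/
def IsTopVar (n : ℕ) (A : Fin n → Atom) (σ' : Subst) (x : ℕ) : Prop :=
  (∃ i, x ∈ (A i).vars) ∧
    ∀ y : ℕ, (∃ i, y ∈ (A i).vars) → (σ' y).depth ≤ (σ' x).depth

/-- The data of an application of the top-variable resolution rule TRes:
main premise `¬A₁ ∨ … ∨ ¬Aₙ ∨ D`,  side premises `Bᵢ ∨ Dᵢ`,
`σ'` a simultaneous mgu of all `n` pairs used to compute top variables, and
`σ` a simultaneous mgu of the first `m` (top-variable) pairs. -/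
structure TResApp where
  n : ℕ
  m : ℕ
  A : Fin n → Atom
  B : Fin n → Atom
  Ds : Fin n → Clause
  D : Clause
  σ' : Subst
  σ : Subst

namespace TResApp

def mainPremise (t : TResApp) : Clause :=
  (List.ofFn fun i => Lit.mkNeg (t.A i)) ++ t.D

def sidePremise (t : TResApp) (i : Fin t.n) : Clause :=
  Lit.mkPos (t.B i) :: t.Ds i

def sidePremises (t : TResApp) : List Clause := List.ofFn t.sidePremise

def resolvent (t : TResApp) : Clause :=
  Clause.subst t.σ
    ((((List.finRange t.n).filter fun i => i.1 < t.m).flatMap t.Ds) ++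
     (((List.finRange t.n).filter fun i => t.m ≤ i.1).map fun i => Lit.mkNeg (t.A i)) ++
     t.D)

/-- Side conditions of the TRes rule. -/
def wf (ord : Lit → Lit → Prop) (t : TResApp) : Prop :=
  0 < t.m ∧ t.m ≤ t.n ∧
  (∀ L ∈ t.D, L.pos = true) ∧
  IsSimMGU t.σ' ((List.finRange t.n).map fun i => (t.A i, t.B i)) ∧
  IsSimMGU t.σ (((List.finRange t.n).filter fun i => i.1 < t.m).map fun i => (t.A i, t.B i)) ∧
  (∀ i : Fin t.n, i.1 < t.m ↔ ∃ x, IsTopVar t.n t.A t.σ' x ∧ x ∈ (t.A i).vars) ∧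
  (∀ i, strictMaxIn ord (Lit.mkPos (t.B i)) (t.Ds i)) ∧
  (∀ i, Clause.vars (t.sidePremise i) ∩ Clause.vars t.mainPremise = ∅) ∧
  (∀ i j, i ≠ j → Clause.vars (t.sidePremise i) ∩ Clause.vars (t.sidePremise j) = ∅)

end TResApp

/-! ### The generating inferences of T-Inf -/

/-- The conclusion-generating inferences of the top-variable inference system T-Inf:
ordered resolution with selection (Res), ordered factoring (Fact), and top-variable
resolution (TRes). `TInfInf ord sel ps c` means `c` is the conclusion of an inference
with premises `ps`. -/
inductive TInfInf (ord : Lit → Lit → Prop) (sel : SelFn) : List Clause → Clause → Prop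
  | res {B A : Atom} {D1 D : Clause} {σ : Subst} :
      IsMGU σ A B →
      sel (Lit.mkPos B :: D1) = ∅ →
      strictMaxIn ord (Lit.mkPos B) D1 →
      Eligible ord sel (Lit.mkNeg A :: D) (Lit.mkNeg A) →
      Clause.vars (Lit.mkPos B :: D1) ∩ Clause.vars (Lit.mkNeg A :: D) = ∅ →
      TInfInf ord sel [Lit.mkPos B :: D1, Lit.mkNeg A :: D] (Clause.subst σ (D1 ++ D))
  | fact {A1 A2 : Atom} {C : Clause} {σ : Subst} :
      IsMGU σ A1 A2 →
      sel (C ++ [Lit.mkPos A1, Lit.mkPos A2]) = ∅ →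
      maxIn ord (Lit.mkPos A1) (C ++ [Lit.mkPos A2]) →
      TInfInf ord sel [C ++ [Lit.mkPos A1, Lit.mkPos A2]] (Clause.subst σ (C ++ [Lit.mkPos A1]))
  | tres (t : TResApp) :
      t.wf ord →
      (∀ i, sel (t.sidePremise i) = ∅) →
      (∀ i : Fin t.n, i.1 < t.m → Lit.mkNeg (t.A i) ∈ sel t.mainPremise) →
      TInfInf ord sel (t.sidePremises ++ [t.mainPremise]) t.resolvent

/-- `N` is saturated up to redundancy with respect to the inference system `inf`:
every inference from non-redundant premises of `N` is redundant in `N`. -/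
def SaturatedUpToRedundancy (ord : Lit → Lit → Prop)
    (inf : List Clause → Clause → Prop) (N : Set Clause) : Prop :=
  ∀ (ps : List Clause) (c : Clause), inf ps c → (∀ p ∈ ps, p ∈ N) →
    RedundantInference ord N ps c


/-! ### Surface literals, chained and isolated variables of query clauses -/

/-- `L` is a surface literal of `Q`: no other literal of `Q` has a strictly larger
variable set. -/
def SurfaceLit (Q : Clause) (L : Lit) : Prop :=
  L ∈ Q ∧ ∀ L' ∈ Q, ¬ (L.vars ⊂ L'.vars)

/-- `x` is a chained variable of `Q`: it occurs in two distinct surface literals with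
different, mutually non-inclusive variable sets. -/
def ChainedVar (Q : Clause) (x : ℕ) : Prop :=
  ∃ L L' : Lit, SurfaceLit Q L ∧ SurfaceLit Q L' ∧ L ≠ L' ∧
    ¬ L.vars ⊆ L'.vars ∧ ¬ L'.vars ⊆ L.vars ∧ x ∈ L.vars ∧ x ∈ L'.vars

/-- `x` is an isolated variable of `Q`: a variable of `Q` that is not chained. -/
def IsolatedVar (Q : Clause) (x : ℕ) : Prop := x ∈ Clause.vars Q ∧ ¬ ChainedVar Q x

/-- A query clause is isolated-only if all its variables are isolated. -/
def Clause.isolatedOnly (Q : Clause) : Prop := ∀ x ∈ Clause.vars Q, ¬ ChainedVar Q x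

/-- A query clause is chained-only if all its variables are chained. -/
def Clause.chainedOnly (Q : Clause) : Prop := ∀ x ∈ Clause.vars Q, ChainedVar Q x

/-! ### The inferences of Q-AR -/

/-- The inferences of Q-AR: the T-Inf inferences together with the separation
inferences (Sep) and the T-Trans renaming inferences, both introducing fresh,
smaller definer predicate symbols. -/
inductive QARInf (ord : Lit → Lit → Prop) (sel : SelFn) : List Clause → Clause → Prop
  | tinf {ps : List Clause} {c : Clause} : TInfInf ord sel ps c → QARInf ord sel ps c
  | sepL {C D : Clause} {ds : ℕ} {xs : List ℕ} :
      Separable C D → {x | x ∈ xs} = Clause.vars C ∩ Clause.vars D →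
      ds ∉ Clause.preds (C ++ D) →
      QARInf ord sel [C ++ D] (Lit.mkNeg ⟨ds, xs.map Term.var⟩ :: C)
  | sepR {C D : Clause} {ds : ℕ} {xs : List ℕ} :
      Separable C D → {x | x ∈ xs} = Clause.vars C ∩ Clause.vars D →
      ds ∉ Clause.preds (C ++ D) →
      QARInf ord sel [C ++ D] (Lit.mkPos ⟨ds, xs.map Term.var⟩ :: D)
  | ttransDef {E F : Clause} {d : ℕ} {xs : List ℕ} :
      {x | x ∈ xs} = Clause.vars E → d ∉ Clause.preds (F ++ E) →
      QARInf ord sel [F ++ E] (Lit.mkPos ⟨d, xs.map Term.var⟩ :: E)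
  | ttransQ {E F : Clause} {d : ℕ} {xs : List ℕ} :
      {x | x ∈ xs} = Clause.vars E → d ∉ Clause.preds (F ++ E) →
      QARInf ord sel [F ++ E] (F ++ [Lit.mkNeg ⟨d, xs.map Term.var⟩])

/-! ### Q-AR as a transition system on clause sets -/

/-- A single derivation step of the procedure Q-AR on clause sets: adding a
Res/TRes/Fact conclusion, replacement by a condensation, deletion of tautologies and
variants, separation (Sep) and the renaming T-Trans (both with fresh definer
predicate symbols). -/
inductive QARStep : Set Clause → Set Clause → Prop
  | res {N : Set Clause} {A B : Atom} {D1 D : Clause} {σ : Subst} :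
      (Lit.mkPos B :: D1) ∈ N → (Lit.mkNeg A :: D) ∈ N → IsMGU σ A B →
      QARStep N (insert (Clause.subst σ (D1 ++ D)) N)
  | tres {N : Set Clause} (t : TResApp) :
      (∀ i, t.sidePremise i ∈ N) → t.mainPremise ∈ N →
      (∀ i : Fin t.n, i.1 < t.m → Atom.subst t.σ (t.A i) = Atom.subst t.σ (t.B i)) →
      QARStep N (insert t.resolvent N)
  | fact {N : Set Clause} {A1 A2 : Atom} {C : Clause} {σ : Subst} :
      (C ++ [Lit.mkPos A1, Lit.mkPos A2]) ∈ N → IsMGU σ A1 A2 →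
      QARStep N (insert (Clause.subst σ (C ++ [Lit.mkPos A1])) N)
  | conden {N : Set Clause} {C D : Clause} :
      C ∈ N → IsCondensation D C → QARStep N (insert D (N \ {C}))
  | deleteTaut {N : Set Clause} {C : Clause} :
      C ∈ N → Tautology C → QARStep N (N \ {C})
  | deleteVariant {N : Set Clause} {C C' : Clause} :
      C ∈ N → C' ∈ N → C ≠ C' → Variant C C' → QARStep N (N \ {C})
  | sep {N : Set Clause} {C D : Clause} {ds : ℕ} {xs : List ℕ} :
      (C ++ D) ∈ N → Separable C D → {x | x ∈ xs} = Clause.vars C ∩ Clause.vars D →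
      ds ∉ SetPreds N →
      QARStep N (insert (Lit.mkNeg ⟨ds, xs.map Term.var⟩ :: C)
        (insert (Lit.mkPos ⟨ds, xs.map Term.var⟩ :: D) (N \ {C ++ D})))
  | ttrans {N : Set Clause} {E F : Clause} {d : ℕ} {xs : List ℕ} :
      (F ++ E) ∈ N → {x | x ∈ xs} = Clause.vars E → d ∉ SetPreds N →
      QARStep N (insert (F ++ [Lit.mkNeg ⟨d, xs.map Term.var⟩])
        (insert (Lit.mkPos ⟨d, xs.map Term.var⟩ :: E) (N \ {F ++ E})))

namespace MguAux

open Classical in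
/-- Flat abstraction. -/
noncomputable def flatten (t : Term) : Term := if t.isConst then t else .var 0

/-- One-level abstraction. -/
noncomputable def cut : Term → Term
  | .var x => .var x
  | .app h ts => .app h (ts.map flatten)

open Classical in
noncomputable def kap (K : Set Term) (t : Term) : Term := if t ∈ K then cut t else flatten t

theorem subst_app (σ : Subst) (h : Head) (ts : List Term) :
    (Term.app h ts).subst σ = .app h (ts.map (Term.subst σ)) := by
  rw [Term.subst]; simp

theorem subst_var (σ : Subst) (x : ℕ) : (Term.var x).subst σ = σ x := by
  rw [Term.subst]

theorem isConst_iff (t : Term) : t.isConst ↔ ∃ c, t = .app (.cn c) [] := by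
  constructor
  · intro h
    unfold Term.isConst at h
    split at h
    · exact ⟨_, rfl⟩
    · exact h.elim
  · rintro ⟨c, rfl⟩; trivial

theorem flatArg_iff (t : Term) : t.flatArg ↔ (∃ x, t = .var x) ∨ ∃ c, t = .app (.cn c) [] := by
  unfold Term.flatArg
  rw [isConst_iff]
  cases t <;> simp [Term.isVar]

theorem const_subst (σ : Subst) (c : ℕ) :
    (Term.app (.cn c) []).subst σ = .app (.cn c) [] := by
  rw [subst_app]; rfl

theorem flatten_flat (t : Term) : (flatten t).flatArg := by
  unfold flatten
  split
  · exact Or.inr ‹_›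
  · exact Or.inl trivial

theorem flat_simple {t : Term} (h : t.flatArg) : t.simpleArg := by
  rw [flatArg_iff] at h
  rcases h with ⟨x, rfl⟩ | ⟨c, rfl⟩ <;> simp [Term.simpleArg]

theorem kap_simple (K : Set Term) (t : Term) : (kap K t).simpleArg := by
  unfold kap
  split
  · cases t with
    | var x => trivial
    | app h ts =>
      intro u hu
      obtain ⟨v, -, rfl⟩ := List.mem_map.1 hu
      exact flatten_flat v
  · exact flat_simple (flatten_flat t)

theorem flat_of_subst {ρ : Subst} {t : Term} (h : (t.subst ρ).flatArg) : t.flatArg := by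
  cases t with
  | var x => exact Or.inl trivial
  | app g ts =>
    rw [subst_app, flatArg_iff] at h
    rw [flatArg_iff]
    simpa using h

theorem simple_of_subst {ρ : Subst} {t : Term} (h : (t.subst ρ).simpleArg) : t.simpleArg := by
  cases t with
  | var x => trivial
  | app g ts =>
    rw [subst_app] at h
    intro u hu
    exact flat_of_subst (h _ (List.mem_map_of_mem hu))

theorem subst_comp (σ ρ θ : Subst) (h : ∀ x, (σ x).subst ρ = θ x) :
    ∀ t : Term, (t.subst σ).subst ρ = t.subst θ
  | .var x => by rw [subst_var, subst_var, h]
  | .app g ts => by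
    rw [subst_app, subst_app, subst_app, List.map_map]
    congr 1
    apply List.map_congr_left
    intro t ht
    exact subst_comp σ ρ θ h t
  termination_by t => sizeOf t
  decreasing_by
    have := List.sizeOf_lt_of_mem ht
    simp only [Term.app.sizeOf_spec]
    omega

theorem size_lt (σ : Subst) {h : Head} {ts : List Term} {u : ℕ} (hu : Term.var u ∈ ts) :
    sizeOf (σ u) < sizeOf ((Term.app h ts).subst σ) := by
  rw [subst_app]
  have : σ u ∈ ts.map (Term.subst σ) := List.mem_map.2 ⟨_, hu, subst_var _ _⟩
  have := List.sizeOf_lt_of_mem this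
  simp only [Term.app.sizeOf_spec]
  omega

theorem compound_app {t : Term} (h : t.isCompound) : ∃ g ts, t = .app g ts := by
  cases t with
  | var x => exact (h.1 trivial).elim
  | app g ts => exact ⟨g, ts, rfl⟩

theorem compound_subst {σ : Subst} {t : Term} (h : t.isCompound) : ¬ (t.subst σ).isConst := by
  obtain ⟨g, ts, rfl⟩ := compound_app h
  intro h'
  apply h.2
  rw [subst_app, isConst_iff] at h'
  rw [isConst_iff]
  simpa using h'

/-- Variables of the literal are direct arguments of any compound argument. -/
theorem mem_args {A : Lit} (hs : A.simple) (hc : A.covering) {g : Head} {ts : List Term}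
    (hm : Term.app g ts ∈ A.atom.args) (hcomp : (Term.app g ts).isCompound)
    {x : ℕ} (hx : x ∈ A.vars) : Term.var x ∈ ts := by
  rw [← hc _ ⟨_, hm, .refl _⟩ hcomp] at hx
  cases hx with
  | app ht hv =>
    rename_i t
    have := hs _ hm t ht
    rw [flatArg_iff] at this
    rcases this with ⟨y, rfl⟩ | ⟨c, rfl⟩
    · cases hv; exact ht
    · cases hv with
      | app h _ => simp at h

theorem var_mem_vars {A : Lit} {t : Term} (hm : t ∈ A.atom.args) {x : ℕ} (hx : t.HasVar x) :
    x ∈ A.vars := ⟨t, hm, hx⟩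

/-- The images of compound arguments. -/
def KK (σ : Subst) (A : Lit) : Set Term :=
  {t | ∃ c ∈ A.atom.args, c.isCompound ∧ t = c.subst σ}

theorem key {A B : Lit} {σ : Subst} (hsA : A.simple) (hsB : B.simple)
    (hcA : A.covering) (hcB : B.covering)
    (hu : A.atom.args.map (Term.subst σ) = B.atom.args.map (Term.subst σ))
    {g : Head} {ts : List Term} (hm : Term.app g ts ∈ B.atom.args)
    (hcomp : (Term.app g ts).isCompound) {u : ℕ} (hut : Term.var u ∈ ts) :
    σ u ∉ KK σ A ∪ KK σ B := by
  have huB : u ∈ B.vars := var_mem_vars hm (.app hut (.var u))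
  rintro (⟨c, hcm, hcc, he⟩ | ⟨c, hcm, hcc, he⟩)
  · obtain ⟨h, ss, rfl⟩ := compound_app hcc
    have hlt : ∀ w ∈ A.vars, sizeOf (σ w) < sizeOf (σ u) := by
      intro w hw
      rw [he]
      exact size_lt σ (mem_args hsA hcA hcm hcc hw)
    have : (Term.app g ts).subst σ ∈ A.atom.args.map (Term.subst σ) := by
      rw [hu]; exact List.mem_map_of_mem hm
    obtain ⟨d, hdm, hd⟩ := List.mem_map.1 this
    cases d with
    | var w =>
      rw [subst_var] at hd
      have h1 := hlt w (var_mem_vars hdm (.var w))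
      have h2 := size_lt σ (h := g) hut
      rw [← hd] at h2
      omega
    | app k rs =>
      rw [subst_app, subst_app] at hd
      injection hd with _ hd
      have : σ u ∈ rs.map (Term.subst σ) := by
        rw [hd]; exact List.mem_map.2 ⟨_, hut, subst_var _ _⟩
      obtain ⟨s, hsm, hse⟩ := List.mem_map.1 this
      have := hsA _ hdm s hsm
      rw [flatArg_iff] at this
      rcases this with ⟨w, rfl⟩ | ⟨c, rfl⟩
      · rw [subst_var] at hse
        have h1 := hlt w (var_mem_vars hdm (.app hsm (.var w)))
        rw [hse] at h1
        omega
      · rw [const_subst] at hse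
        apply compound_subst (σ := σ) hcc
        rw [← he, ← hse]
        trivial
  · obtain ⟨h, ss, rfl⟩ := compound_app hcc
    have := size_lt σ (h := h) (mem_args hsB hcB hcm hcc huB)
    rw [← he] at this
    omega

theorem kap_const {K : Set Term} (hK : ∀ t ∈ K, ¬ t.isConst) (c : ℕ) :
    kap K (.app (.cn c) []) = .app (.cn c) [] := by
  unfold kap
  have hn : Term.app (.cn c) [] ∉ K := fun h => hK _ h ((isConst_iff _).2 ⟨c, rfl⟩)
  rw [if_neg hn]
  exact if_pos trivial

theorem subst_kap {K : Set Term} {σ : Subst} {A : Lit} (hs : A.simple)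
    (hK : ∀ t ∈ K, ¬ t.isConst) (hAK : KK σ A ⊆ K)
    (hkey : ∀ g ts, Term.app g ts ∈ A.atom.args → (Term.app g ts).isCompound →
      ∀ u, Term.var u ∈ ts → σ u ∉ K) {a : Term} (ha : a ∈ A.atom.args) :
    a.subst (fun x => kap K (σ x)) = kap K (a.subst σ) := by
  by_cases hc : a.isCompound
  · have hmem : a.subst σ ∈ K := hAK ⟨a, ha, hc, rfl⟩
    obtain ⟨g, ts, rfl⟩ := compound_app hc
    rw [kap, if_pos hmem, subst_app, subst_app, cut, List.map_map]
    congr 1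
    apply List.map_congr_left
    intro t ht
    have := hs _ ha t ht
    rw [flatArg_iff] at this
    rcases this with ⟨w, rfl⟩ | ⟨c, rfl⟩
    · simp only [Function.comp, subst_var]
      exact if_neg (hkey g ts ha hc w ht)
    · simp only [Function.comp, const_subst]
      exact (if_pos trivial).symm
  · have : a.flatArg := by
      unfold Term.isCompound at hc
      unfold Term.flatArg
      tauto
    rw [flatArg_iff] at this
    rcases this with ⟨w, rfl⟩ | ⟨c, rfl⟩
    · simp only [subst_var]
    · simp only [const_subst, kap_const hK]

end MguAux

/-- Lemma C.6:  Let `A₁` and `A₂` be two simple and covering literals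
that are unifiable with mgu `σ`.  Then `A₁σ` is simple. -/
theorem mgu_instance_simple (A1 A2 : Lit) (σ : Subst)
    (hs1 : A1.simple) (hs2 : A2.simple)
    (hcov1 : A1.covering) (hcov2 : A2.covering)
    (hmgu : Lit.isMGU σ A1 A2) :
    Lit.simple (A1.subst σ) := by
  obtain ⟨hun, hgen⟩ := hmgu
  have hun' : A1.subst σ = A2.subst σ := hun
  have hpos : A1.pos = A2.pos := by
    have := congrArg Lit.pos hun'
    exact this
  have hpred : A1.atom.pred = A2.atom.pred := by
    have := congrArg (fun L : Lit => L.atom.pred) hun'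
    exact this
  have hargs : A1.atom.args.map (Term.subst σ) = A2.atom.args.map (Term.subst σ) :=
    congrArg (fun L : Lit => L.atom.args) (show A1.subst σ = A2.subst σ from hun)
  let K := MguAux.KK σ A1 ∪ MguAux.KK σ A2
  let θ : Subst := fun x => MguAux.kap K (σ x)
  have hK : ∀ t ∈ K, ¬ t.isConst := by
    rintro t (⟨c, -, hc, rfl⟩ | ⟨c, -, hc, rfl⟩) <;> exact MguAux.compound_subst hc
  have h1 : ∀ a ∈ A1.atom.args, a.subst θ = MguAux.kap K (a.subst σ) := fun a ha =>
    MguAux.subst_kap hs1 hK Set.subset_union_left (fun g ts hm hc u hu => by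
      have := MguAux.key hs2 hs1 hcov2 hcov1 hargs.symm hm hc hu
      rwa [Set.union_comm] at this) ha
  have h2 : ∀ a ∈ A2.atom.args, a.subst θ = MguAux.kap K (a.subst σ) := fun a ha =>
    MguAux.subst_kap hs2 hK Set.subset_union_right (fun g ts hm hc u hu =>
      MguAux.key hs1 hs2 hcov1 hcov2 hargs hm hc hu) ha
  have hθ : Lit.unifies θ A1 A2 := by
    have e1 : A1.atom.args.map (Term.subst θ)
        = (A1.atom.args.map (Term.subst σ)).map (MguAux.kap K) := by
      rw [List.map_map]; exact List.map_congr_left h1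
    have e2 : A2.atom.args.map (Term.subst θ)
        = (A2.atom.args.map (Term.subst σ)).map (MguAux.kap K) := by
      rw [List.map_map]; exact List.map_congr_left h2
    simp only [Lit.unifies, Lit.subst, Atom.subst, e1, e2, hargs, hpos, hpred]
  obtain ⟨ρ, hρ⟩ := hgen θ hθ
  intro t ht
  obtain ⟨a, ha, rfl⟩ := List.mem_map.1 ht
  apply MguAux.simple_of_subst (ρ := ρ)
  rw [MguAux.subst_comp σ ρ θ hρ, h1 a ha]
  exact MguAux.kap_simple _ _
end QGF
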